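/- arXiv:2008.06403 — 7 statements merged into one kernel-verified Lean document; each statement's English description precedes it below -/
import Mathlib

section
/- Let p ≥ 5 be a prime, let n, k, t be natural numbers with k ≤ n, let H be an (n−k)×n matrix over ZMod p, and let C = {c ∈ (ZMod p)^n : H·cᵀ = 0} be the code with parity-check matrix H. Assume that every nonzero c ∈ C whose entries all lie in {0, 1, −1, 2, −2} has restricted weight w̃(c) > 2t. Then for any two vectors e, e′ ∈ (ZMod p)^n whose entries all lie in {0, 1, −1} and whose Hamming weights are both at most t, the equality H·eᵀ = H·e′ᵀ implies e = e′. -/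
/-- The restricted weight of a vector over `ZMod p`: the number of entries equal to `±1`
plus twice the number of entries equal to `±2`. -/
def restrictedWeight {p n : ℕ} (x : Fin n → ZMod p) : ℕ :=
  ∑ i, if x i = 1 ∨ x i = -1 then 1 else if x i = 2 ∨ x i = -2 then 2 else 0

/-!
Two errors with the same syndrome differ by a codeword with entries in `{0, ±1, ±2}`. An entry of
this difference weighs at most the number of nonzero entries among the two it comes from: weight `2`
requires both to be nonzero. So the codeword has restricted weight at most `2t`, which
forces it to vanish.
-/

theorem sub_mem_of_mem_zero_one_neg_one {R : Type*} [AddGroupWithOne R] {a b : R}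
    (ha : a ∈ ({0, 1, -1} : Set R)) (hb : b ∈ ({0, 1, -1} : Set R)) :
    a - b ∈ ({0, 1, -1, 2, -2} : Set R) := by
  rcases ha with rfl | rfl | rfl <;> rcases hb with rfl | rfl | rfl <;>
    simp [sub_eq_add_neg, ← neg_add_rev, one_add_one_eq_two]

/-- The contribution of a single entry to `restrictedWeight`. The `±1` test comes first, so `±2`
has weight `1` over `ZMod 3`, and `0 = 2` has weight `2` over `ZMod 2`. -/
def entryWeight {p : ℕ} (a : ZMod p) : ℕ :=
  if a = 1 ∨ a = -1 then 1 else if a = 2 ∨ a = -2 then 2 else 0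

section EntryWeight

variable {p : ℕ}

theorem entryWeight_le_two (a : ZMod p) : entryWeight a ≤ 2 := by
  unfold entryWeight
  split_ifs <;> decide

theorem entryWeight_neg (a : ZMod p) : entryWeight (-a) = entryWeight a := by
  simp only [entryWeight, neg_eq_iff_eq_neg, neg_neg, or_comm (b := a = 1), or_comm (b := a = 2)]

theorem entryWeight_zero (h2 : (2 : ZMod p) ≠ 0) : entryWeight (0 : ZMod p) = 0 := by
  have h1 : (1 : ZMod p) ≠ 0 := fun h ↦ h2 (by rw [← one_add_one_eq_two, h, add_zero])
  simp [entryWeight, h1, h2, h1.symm, h2.symm]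

theorem entryWeight_eq_ite_of_mem (h2 : (2 : ZMod p) ≠ 0) {a : ZMod p}
    (ha : a ∈ ({0, 1, -1} : Set (ZMod p))) : entryWeight a = if a ≠ 0 then 1 else 0 := by
  by_cases ha0 : a = 0
  · simp [ha0, entryWeight_zero h2]
  · have ha1 : a = 1 ∨ a = -1 := ha.resolve_left ha0
    rw [entryWeight, if_pos ha1, if_pos ha0]

theorem entryWeight_sub_le_of_mem (h2 : (2 : ZMod p) ≠ 0) {a b : ZMod p}
    (ha : a ∈ ({0, 1, -1} : Set (ZMod p))) (hb : b ∈ ({0, 1, -1} : Set (ZMod p))) :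
    entryWeight (a - b) ≤ (if a ≠ 0 then 1 else 0) + if b ≠ 0 then 1 else 0 := by
  by_cases ha0 : a = 0
  · simp [ha0, entryWeight_neg, entryWeight_eq_ite_of_mem h2 hb]
  by_cases hb0 : b = 0
  · simp [hb0, entryWeight_eq_ite_of_mem h2 ha]
  · simpa [ha0, hb0] using entryWeight_le_two (a - b)

end EntryWeight

theorem hammingNorm_eq_sum_ite {ι : Type*} [Fintype ι] {β : ι → Type*} [∀ i, DecidableEq (β i)]
    [∀ i, Zero (β i)] (x : ∀ i, β i) : hammingNorm x = ∑ i, if x i ≠ 0 then 1 else 0 :=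
  Finset.card_filter _ _

theorem restrictedWeight_sub_le_hammingNorm_add {p n : ℕ} (h2 : (2 : ZMod p) ≠ 0)
    {e e' : Fin n → ZMod p} (he : ∀ i, e i ∈ ({0, 1, -1} : Set (ZMod p)))
    (he' : ∀ i, e' i ∈ ({0, 1, -1} : Set (ZMod p))) :
    restrictedWeight (e - e') ≤ hammingNorm e + hammingNorm e' := by
  rw [hammingNorm_eq_sum_ite, hammingNorm_eq_sum_ite, ← Finset.sum_add_distrib]
  exact Finset.sum_le_sum fun i _ ↦ entryWeight_sub_le_of_mem h2 (he i) (he' i)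

theorem stmt0_general {p : ℕ} (h2 : (2 : ZMod p) ≠ 0) {m : Type*} {n t : ℕ}
    (H : Matrix m (Fin n) (ZMod p))
    (hmin : ∀ c : Fin n → ZMod p, H.mulVec c = 0 → c ≠ 0 →
      (∀ i, c i ∈ ({0, 1, -1, 2, -2} : Set (ZMod p))) → 2 * t < restrictedWeight c)
    (e e' : Fin n → ZMod p)
    (he : ∀ i, e i ∈ ({0, 1, -1} : Set (ZMod p)))
    (he' : ∀ i, e' i ∈ ({0, 1, -1} : Set (ZMod p)))
    (hwt : hammingNorm e ≤ t) (hwt' : hammingNorm e' ≤ t)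
    (hsyndrome : H.mulVec e = H.mulVec e') : e = e' := by
  by_contra hne
  have hker : H.mulVec (e - e') = 0 := by rw [Matrix.mulVec_sub, hsyndrome, sub_self]
  have hlower : 2 * t < restrictedWeight (e - e') :=
    hmin _ hker (sub_ne_zero.mpr hne) fun i ↦ sub_mem_of_mem_zero_one_neg_one (he i) (he' i)
  have hupper : restrictedWeight (e - e') ≤ hammingNorm e + hammingNorm e' :=
    restrictedWeight_sub_le_hammingNorm_add h2 he he'
  lia

theorem stmt0 {p : ℕ} [Fact p.Prime] (hp : 5 ≤ p) {n k t : ℕ} (hkn : k ≤ n)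
    (H : Matrix (Fin (n - k)) (Fin n) (ZMod p))
    (hmin : ∀ c : Fin n → ZMod p, H.mulVec c = 0 → c ≠ 0 →
      (∀ i, c i ∈ ({0, 1, -1, 2, -2} : Set (ZMod p))) → 2 * t < restrictedWeight c) :
    ∀ e e' : Fin n → ZMod p,
      (∀ i, e i ∈ ({0, 1, -1} : Set (ZMod p))) →
      (∀ i, e' i ∈ ({0, 1, -1} : Set (ZMod p))) →
      hammingNorm e ≤ t → hammingNorm e' ≤ t →
      H.mulVec e = H.mulVec e' → e = e' :=
  have h2 : (2 : ZMod p) ≠ 0 := Ring.two_ne_zero (by rw [ZMod.ringChar_zmod_n]; lia)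
  stmt0_general h2 H hmin
end

section
/- Let p ≥ 5 be a prime, n ≥ 1 a natural number, and d̃ ≥ 1 a natural number. There exists a linear subspace C ⊆ (ZMod p)^n such that every nonzero c ∈ C whose entries all lie in {0, 1, −1, 2, −2} has restricted weight w̃(c) ≥ d̃, and such that p^{n−1} ≤ p^{dim C} · Ṽ(n, d̃−1), where dim C is the dimension of C over ZMod p. (Equivalently, dim C ≥ n − 1 − log_p Ṽ(n, d̃−1).) -/
/-- The volume `Ṽ(n,t)` of the restricted ball of radius `t` in dimension `n`. -/
def Vtilde (n t : ℕ) : ℕ :=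
  ∑ i ∈ Finset.range (t + 1), ∑ j ∈ Finset.Icc (i - n) (i / 2),
    n.choose j * (n - j).choose (i - 2 * j) * 2 ^ (i - j)

/-!
This is a Gilbert–Varshamov argument. Let `C` be maximal among the subspaces meeting a set `B` of
forbidden vectors at most in `0`. For `v ∉ C`, maximality puts a nonzero vector `b = c + a • v` of
`B` into `C + K v`; here `a ≠ 0` because `b ∉ C`, so `v ∈ C + K b`. Hence the sets `C + a • b`
with `a ∈ K` and `b ∈ B` cover the space, and `|V| ≤ |C| |K| |B|`. For `B` one takes the vectors
that carry `±1` on a set `S`, `±2` on a disjoint set `T` and `0` elsewhere, where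
`|S| + 2 |T| ≤ t`; summing over `|S| + 2 |T| = i` and `|T| = j` bounds their number by `Ṽ(n, t)`.
-/

open Finset

section GilbertVarshamov

variable {K V : Type*} [DivisionRing K] [AddCommGroup V] [Module K V]

theorem exists_add_smul_eq_of_maximal_avoiding {B : Set V} (hB : B.Nonempty) {C : Submodule K V}
    (hC : Maximal (fun D : Submodule K V ↦ ∀ b ∈ B, b ∈ D → b = 0) C) (v : V) :
    ∃ c ∈ C, ∃ a : K, ∃ b ∈ B, c + a • b = v := by
  by_cases hv : v ∈ C
  · obtain ⟨b, hb⟩ := hB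
    exact ⟨v, hv, 0, b, hb, by simp⟩
  have not_avoiding : ¬ ∀ b ∈ B, b ∈ C ⊔ K ∙ v → b = 0 := fun h ↦
    hv (hC.le_of_ge h le_sup_left (Submodule.mem_sup_right (Submodule.mem_span_singleton_self v)))
  push Not at not_avoiding
  obtain ⟨b, hbB, hb, hb0⟩ := not_avoiding
  obtain ⟨c, hc, _, hav, rfl⟩ := Submodule.mem_sup.mp hb
  obtain ⟨a, rfl⟩ := Submodule.mem_span_singleton.mp hav
  have ha : a ≠ 0 := by
    rintro rfl
    exact hb0 (hC.prop _ hbB (by simpa using hc))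
  exact ⟨-(a⁻¹ • c), C.neg_mem (C.smul_mem _ hc), a⁻¹, c + a • v, hbB, by simp [smul_smul, ha]⟩

theorem exists_submodule_avoiding_pow_finrank_le [Finite K] [Module.Finite K V]
    {B : Finset V} (hB : B.Nonempty) :
    ∃ C : Submodule K V, (∀ b ∈ B, b ∈ C → b = 0) ∧
      Nat.card K ^ Module.finrank K V ≤ Nat.card K ^ (Module.finrank K C + 1) * #B := by
  have : Finite V := Module.finite_of_finite K
  obtain ⟨C, hC⟩ := (Set.toFinite {C : Submodule K V | ∀ b ∈ B, b ∈ C → b = 0}).exists_maximal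
    ⟨⊥, fun b _ hb ↦ (Submodule.mem_bot K).mp hb⟩
  refine ⟨C, hC.prop, ?_⟩
  have cover : Function.Surjective
      (fun q : (C × K) × B ↦ (q.1.1 : V) + q.1.2 • (q.2 : V)) := fun v ↦ by
    obtain ⟨c, hc, a, b, hb, rfl⟩ := exists_add_smul_eq_of_maximal_avoiding hB hC v
    exact ⟨((⟨c, hc⟩, a), ⟨b, hb⟩), rfl⟩
  calc Nat.card K ^ Module.finrank K V
      = Nat.card V := Module.natCard_eq_pow_finrank.symm
    _ ≤ Nat.card ((C × K) × B) := Nat.card_le_card_of_surjective _ cover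
    _ = Nat.card K ^ (Module.finrank K C + 1) * #B := by
        rw [Nat.card_prod, Nat.card_prod, Module.natCard_eq_pow_finrank (K := K) (V := C),
          pow_succ, Nat.card_eq_fintype_card (α := B), Fintype.card_coe]

end GilbertVarshamov

section RestrictedVectors

variable {ι R : Type*} [Fintype ι] [Ring R] [DecidableEq R]

/-- The contribution of a single entry to the restricted weight: `1` for `±1`, `2` for `±2`, and
`0` otherwise. When symbols coincide, the first case that applies counts: `2 = -1` has weight `1`
in characteristic `3`, and `0 = 2` has weight `2` in characteristic `2`. -/
def symbolWeight (a : R) : ℕ :=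
  if a = 1 ∨ a = -1 then 1 else if a = 2 ∨ a = -2 then 2 else 0

theorem mem_symbols_of_symbolWeight {a : R} (ha : a ∈ ({0, 1, -1, 2, -2} : Set R)) :
    a ∈ (if symbolWeight a = 2 then {2, -2} else if symbolWeight a = 1 then {1, -1} else {0} :
      Finset R) := by
  simp only [Set.mem_insert_iff, Set.mem_singleton_iff] at ha
  unfold symbolWeight
  split_ifs <;> simp_all

/-- The restricted weight of a vector over an arbitrary ring; over `ZMod p` this is
`restrictedWeight`. -/
def vectorWeight (x : ι → R) : ℕ :=
  ∑ i, symbolWeight (x i)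

variable [DecidableEq ι]

variable (R) in
/-- The vectors with entries `±1` on `S`, `±2` on `T` and `0` elsewhere. Meant for disjoint `S`
and `T`; on the overlap the entries are `±2`. -/
def restrictedPattern (S T : Finset ι) : Finset (ι → R) :=
  Fintype.piFinset fun i ↦ if i ∈ T then {2, -2} else if i ∈ S then {1, -1} else {0}

variable (ι R) in
/-- The vectors with `j` entries `±2`, `k` entries `±1` and zeros elsewhere. -/
def restrictedShell (j k : ℕ) : Finset (ι → R) :=
  (powersetCard j univ).biUnion fun T ↦ (powersetCard k Tᶜ).biUnion fun S ↦ restrictedPattern R S T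

variable (ι R) in
/-- The restricted ball of radius `t`, indexed like the sum `Vtilde`: the shells with `j` entries
`±2` and weight `i ≤ t`. -/
def restrictedBall (t : ℕ) : Finset (ι → R) :=
  (range (t + 1)).biUnion fun i ↦
    (Icc (i - Fintype.card ι) (i / 2)).biUnion fun j ↦ restrictedShell ι R j (i - 2 * j)

theorem exists_mem_restrictedPattern {x : ι → R} (hx : ∀ i, x i ∈ ({0, 1, -1, 2, -2} : Set R)) :
    ∃ S T : Finset ι,
      Disjoint S T ∧ #S + 2 * #T = vectorWeight x ∧ x ∈ restrictedPattern R S T := by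
  refine ⟨univ.filter fun i ↦ symbolWeight (x i) = 1,
    univ.filter fun i ↦ symbolWeight (x i) = 2, ?_, ?_, ?_⟩
  · exact disjoint_filter.mpr fun i _ h ↦ by simp [h]
  · rw [card_filter, card_filter, mul_sum, ← sum_add_distrib]
    refine sum_congr rfl fun i _ ↦ ?_
    unfold symbolWeight
    split_ifs <;> simp_all
  · refine Fintype.mem_piFinset.mpr fun i ↦ ?_
    simpa only [mem_filter, mem_univ, true_and] using mem_symbols_of_symbolWeight (hx i)

theorem zero_mem_restrictedPattern_empty : (0 : ι → R) ∈ restrictedPattern R ∅ ∅ :=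
  Fintype.mem_piFinset.mpr fun i ↦ by simp

theorem restrictedPattern_subset_restrictedBall {S T : Finset ι} (hST : Disjoint S T) {t : ℕ}
    (ht : #S + 2 * #T ≤ t) : restrictedPattern R S T ⊆ restrictedBall ι R t := by
  have card_add_card_le : #S + #T ≤ Fintype.card ι := by
    rw [← card_union_of_disjoint hST]
    exact card_le_univ _
  intro x hx
  simp only [restrictedBall, restrictedShell, mem_biUnion, mem_range, mem_Icc, mem_powersetCard]
  exact ⟨#S + 2 * #T, by lia, #T, by lia, T, ⟨subset_univ T, rfl⟩,
    S, ⟨subset_compl_iff_disjoint_right.mpr hST, by lia⟩, hx⟩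

theorem zero_mem_restrictedBall (t : ℕ) : (0 : ι → R) ∈ restrictedBall ι R t :=
  restrictedPattern_subset_restrictedBall (disjoint_empty_left ∅) (by simp)
    zero_mem_restrictedPattern_empty

theorem mem_restrictedBall_of_vectorWeight_le {x : ι → R} {t : ℕ}
    (hx : ∀ i, x i ∈ ({0, 1, -1, 2, -2} : Set R)) (hxt : vectorWeight x ≤ t) :
    x ∈ restrictedBall ι R t := by
  obtain ⟨S, T, hST, hweight, hxST⟩ := exists_mem_restrictedPattern hx
  exact restrictedPattern_subset_restrictedBall hST (hweight.trans_le hxt) hxST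

theorem card_restrictedPattern_le (S T : Finset ι) :
    #(restrictedPattern R S T) ≤ 2 ^ (#S + #T) := by
  rw [restrictedPattern, Fintype.card_piFinset]
  calc ∏ i, #(if i ∈ T then ({2, -2} : Finset R) else if i ∈ S then {1, -1} else {0})
      ≤ ∏ i, if i ∈ S ∪ T then 2 else 1 := by
        refine prod_le_prod' fun i _ ↦ ?_
        split_ifs <;> simp_all [card_le_two]
    _ = 2 ^ #(S ∪ T) := by rw [prod_ite_mem, univ_inter, prod_const]
    _ ≤ 2 ^ (#S + #T) := Nat.pow_le_pow_right two_pos (card_union_le S T)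

theorem card_restrictedShell_le (j k : ℕ) :
    #(restrictedShell ι R j k) ≤
      (Fintype.card ι).choose j * (Fintype.card ι - j).choose k * 2 ^ (k + j) := by
  rw [mul_assoc, ← card_univ (α := ι), ← card_powersetCard]
  refine card_biUnion_le_card_mul _ _ _ fun T hT ↦ ?_
  obtain ⟨-, rfl⟩ := mem_powersetCard.mp hT
  rw [card_univ, ← card_compl, ← card_powersetCard]
  refine card_biUnion_le_card_mul _ _ _ fun S hS ↦ ?_
  obtain ⟨-, rfl⟩ := mem_powersetCard.mp hS
  exact card_restrictedPattern_le S T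

theorem card_restrictedBall_le_Vtilde (t : ℕ) :
    #(restrictedBall ι R t) ≤ Vtilde (Fintype.card ι) t := by
  refine card_biUnion_le.trans (sum_le_sum fun i _ ↦ ?_)
  refine card_biUnion_le.trans (sum_le_sum fun j hj ↦ ?_)
  have exponent : i - 2 * j + j = i - j := by
    have := (mem_Icc.mp hj).2
    lia
  exact exponent ▸ card_restrictedShell_le j (i - 2 * j)

end RestrictedVectors

theorem stmt3_general (K ι : Type*) [DivisionRing K] [Finite K] [DecidableEq K] [Fintype ι]
    (t : ℕ) :
    ∃ C : Submodule K (ι → K),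
      (∀ c ∈ C, c ≠ 0 → (∀ i, c i ∈ ({0, 1, -1, 2, -2} : Set K)) → t < vectorWeight c) ∧
      Nat.card K ^ Fintype.card ι ≤
        Nat.card K ^ (Module.finrank K C + 1) * Vtilde (Fintype.card ι) t := by
  classical
  obtain ⟨C, avoiding, hcard⟩ := exists_submodule_avoiding_pow_finrank_le (K := K)
    ⟨0, zero_mem_restrictedBall (ι := ι) (R := K) t⟩
  refine ⟨C, fun c hcC hc0 hc ↦ ?_, ?_⟩
  · by_contra! hct
    exact hc0 (avoiding c (mem_restrictedBall_of_vectorWeight_le hc hct) hcC)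
  · rw [Module.finrank_fintype_fun_eq_card] at hcard
    exact hcard.trans (Nat.mul_le_mul_left _ (card_restrictedBall_le_Vtilde t))

theorem stmt3 {p : ℕ} [Fact p.Prime] (hp : 5 ≤ p) {n d : ℕ} (hn : 1 ≤ n) (hd : 1 ≤ d) :
    ∃ C : Submodule (ZMod p) (Fin n → ZMod p),
      (∀ c ∈ C, c ≠ 0 → (∀ i, c i ∈ ({0, 1, -1, 2, -2} : Set (ZMod p))) →
        d ≤ restrictedWeight c) ∧
      p ^ (n - 1) ≤ p ^ (Module.finrank (ZMod p) C) * Vtilde n (d - 1) := by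
  obtain ⟨C, hweight, hcard⟩ := stmt3_general (ZMod p) (Fin n) (d - 1)
  refine ⟨C, fun c hcC hc0 hc ↦ Nat.le_of_pred_lt (hweight c hcC hc0 hc), ?_⟩
  rw [Nat.card_zmod, Fintype.card_fin, pow_succ', mul_assoc,
    ← mul_pow_sub_one (Nat.one_le_iff_ne_zero.mp hn)] at hcard
  exact le_of_mul_le_mul_left hcard (NeZero.pos p)
end

section
/- Let p ≥ 5 be a prime, n ≥ 1 and d̃ ≥ 1 natural numbers. Say that a linear subspace C ⊆ (ZMod p)^n is d̃-good if every nonzero c ∈ C whose entries all lie in {0, 1, −1, 2, −2} has restricted weight w̃(c) ≥ d̃. Suppose C is a d̃-good subspace whose dimension is maximal among all d̃-good subspaces of (ZMod p)^n. Then for every vector x ∈ (ZMod p)^n there exist a nonzero scalar α ∈ (ZMod p)^× and a codeword c ∈ C such that every entry of α·x − c lies in {0, 1, −1, 2, −2} and w̃(α·x − c) ≤ d̃ − 1. -/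
/-- A subspace is `d`-good if every nonzero codeword with all entries in `{0, ±1, ±2}`
has restricted weight at least `d`. -/
def IsGood {p n : ℕ} (d : ℕ) (C : Submodule (ZMod p) (Fin n → ZMod p)) : Prop :=
  ∀ c ∈ C, c ≠ 0 → (∀ i, c i ∈ ({0, 1, -1, 2, -2} : Set (ZMod p))) → d ≤ restrictedWeight c

/-!
Adjoining to a maximal good code `C` a vector `x ∉ C` must create a nonzero light vector
`c + a • x` with `c ∈ C`. Since `C` itself contains no such vector, `a ≠ 0`, and so `a • x` lies
close to the codeword `-c`.
-/

section MaximalSubspace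

variable {K V : Type*} [DivisionRing K] [AddCommGroup V] [Module K V] {C : Submodule K V}

theorem maximal_of_forall_finrank_le [FiniteDimensional K V] {P : Submodule K V → Prop} (hC : P C)
    (hmax : ∀ D, P D → Module.finrank K D ≤ Module.finrank K C) : Maximal P C :=
  ⟨hC, fun D hD hCD ↦ (Submodule.eq_of_le_of_finrank_le hCD (hmax D hD)).ge⟩

theorem exists_unit_smul_sub_mem_of_maximal_disjoint {T : Set V}
    (hC : Maximal (fun D : Submodule K V ↦ Disjoint (D : Set V) T) C) {x : V} (hx : x ∉ C) :
    ∃ α : Kˣ, ∃ c ∈ C, (α : K) • x - c ∈ T := by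
  have hlt : C < C ⊔ K ∙ x :=
    left_lt_sup.mpr fun hle ↦ hx (hle (Submodule.mem_span_singleton_self x))
  obtain ⟨v, hv, hvT⟩ := Set.not_disjoint_iff.mp (hC.not_prop_of_gt hlt)
  obtain ⟨c, hc, _, hax, rfl⟩ := Submodule.mem_sup.mp hv
  obtain ⟨a, rfl⟩ := Submodule.mem_span_singleton.mp hax
  have ha : a ≠ 0 := by
    rintro rfl
    exact Set.disjoint_left.mp hC.prop hc (by simpa using hvT)
  exact ⟨Units.mk0 a ha, -c, C.neg_mem hc, by simpa [add_comm] using hvT⟩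

end MaximalSubspace

section RestrictedWeight

variable {p n d : ℕ}

theorem restrictedWeight_zero (h2 : (2 : ZMod p) ≠ 0) :
    restrictedWeight (0 : Fin n → ZMod p) = 0 := by
  have h1 : (1 : ZMod p) ≠ 0 := fun h ↦ h2 (by rw [← one_add_one_eq_two, h, add_zero])
  simp [restrictedWeight, eq_comm (a := (0 : ZMod p)), h1, h2]

/-- The nonzero vectors with entries in `{0, ±1, ±2}` and restricted weight below `d`: the vectors
that a `d`-good code has to avoid. -/
def lightVectors (p n d : ℕ) : Set (Fin n → ZMod p) :=
  {v | v ≠ 0 ∧ (∀ i, v i ∈ ({0, 1, -1, 2, -2} : Set (ZMod p))) ∧ restrictedWeight v < d}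

theorem isGood_iff_disjoint_lightVectors {C : Submodule (ZMod p) (Fin n → ZMod p)} :
    IsGood d C ↔ Disjoint (C : Set (Fin n → ZMod p)) (lightVectors p n d) := by
  simp [IsGood, lightVectors, Set.disjoint_left]

end RestrictedWeight

theorem stmt4_general {p : ℕ} [Fact p.Prime] (hp : p ≠ 2) {n d : ℕ} (hd : 1 ≤ d)
    {C : Submodule (ZMod p) (Fin n → ZMod p)} (hC : Maximal (IsGood d) C) (x : Fin n → ZMod p) :
    ∃ (α : (ZMod p)ˣ) (c : Fin n → ZMod p), c ∈ C ∧
      (∀ i, ((α : ZMod p) • x - c) i ∈ ({0, 1, -1, 2, -2} : Set (ZMod p))) ∧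
      restrictedWeight ((α : ZMod p) • x - c) < d := by
  by_cases hx : x ∈ C
  · have h2 : (2 : ZMod p) ≠ 0 := Ring.two_ne_zero (by rwa [ZMod.ringChar_zmod_n])
    have hdiff : ((1 : (ZMod p)ˣ) : ZMod p) • x - x = 0 := by simp
    exact ⟨1, x, hx, by simp, by rwa [hdiff, restrictedWeight_zero h2]⟩
  · have hmax : Maximal (fun D : Submodule (ZMod p) (Fin n → ZMod p) ↦
        Disjoint (D : Set (Fin n → ZMod p)) (lightVectors p n d)) C := by
      simpa only [← isGood_iff_disjoint_lightVectors] using hC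
    obtain ⟨α, c, hc, -, hentries, hweight⟩ := exists_unit_smul_sub_mem_of_maximal_disjoint hmax hx
    exact ⟨α, c, hc, hentries, hweight⟩

theorem stmt4 {p : ℕ} [Fact p.Prime] (hp : 5 ≤ p) {n d : ℕ} (hn : 1 ≤ n) (hd : 1 ≤ d)
    (C : Submodule (ZMod p) (Fin n → ZMod p)) (hC : IsGood d C)
    (hmax : ∀ D : Submodule (ZMod p) (Fin n → ZMod p), IsGood d D →
      Module.finrank (ZMod p) D ≤ Module.finrank (ZMod p) C) :
    ∀ x : Fin n → ZMod p, ∃ (α : (ZMod p)ˣ) (c : Fin n → ZMod p), c ∈ C ∧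
      (∀ i, ((α : ZMod p) • x - c) i ∈ ({0, 1, -1, 2, -2} : Set (ZMod p))) ∧
      restrictedWeight ((α : ZMod p) • x - c) ≤ d - 1 := by
  intro x
  obtain ⟨α, c, hc, hentries, hweight⟩ :=
    stmt4_general (by lia) hd (maximal_of_forall_finrank_le hC hmax) x
  exact ⟨α, c, hc, hentries, Nat.le_sub_one_of_lt hweight⟩
end

section
/- Let p > 5 be a prime, let ε be a real number with 0 < ε < 1 − log_p 5, and let k, n be positive integers with k ≤ n·(1 − log_p 5 − ε). Then the number of k×n matrices G over ZMod p for which there exists a nonzero x ∈ (ZMod p)^k such that every entry of x·G lies in {0, 1, −1, 2, −2} is at most p^{kn} · p^{−εn}. Consequently, a uniformly random k×n matrix over ZMod p generates a code containing no nonzero codeword with all entries in {0, 1, −1, 2, −2} with probability at least 1 − p^{−εn}. -/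
/-!
For a fixed `x ≠ 0`, the map `G ↦ x ᵥ* G` is a surjective homomorphism, so `x ᵥ* G` is uniformly
distributed when `G` is. Over a field with `q` elements its `n` entries therefore all lie in `S` for
a proportion `(|S| / q) ^ n` of the matrices. The union bound over the fewer than `q ^ k` vectors
`x` gives a proportion at most `q ^ (k - n + n * log_q |S|) ≤ q ^ (-ε * n)`.
-/

open Matrix

theorem card_preimage_mul_card_codomain {A B : Type*} [AddGroup A] [AddGroup B] {f : A →+ B}
    (hf : Function.Surjective f) (T : Set B) :
    Nat.card (f ⁻¹' T) * Nat.card B = Nat.card T * Nat.card A := by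
  let e := QuotientAddGroup.quotientKerEquivOfSurjective f hf
  have card_preimage : Nat.card (f ⁻¹' T) = Nat.card f.ker * Nat.card T := by
    rw [← Nat.card_preimage_of_injective e.injective (by simp [e.surjective.range_eq]),
      ← Nat.card_prod]
    exact Nat.card_congr (QuotientAddGroup.preimageMkEquivAddSubgroupProdSet f.ker (e ⁻¹' T))
  have card_domain : Nat.card A = Nat.card B * Nat.card f.ker := by
    rw [← Nat.card_congr e.toEquiv, AddSubgroup.card_eq_card_quotient_mul_card_addSubgroup f.ker]
  rw [card_preimage, card_domain]
  ring

theorem pow_mul_pow_le_rpow_mul_pow {q s ε : ℝ} (hq : 1 < q) (hs : 0 < s) {k n : ℕ}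
    (hkn : k ≤ n * (1 - Real.logb q s - ε)) :
    q ^ k * s ^ n ≤ q ^ (-(ε * n)) * q ^ n := by
  have hq₀ : 0 < q := one_pos.trans hq
  have pow_eq : s ^ n = q ^ (Real.logb q s * n) := by
    rw [Real.rpow_mul_natCast hq₀.le, Real.rpow_logb hq₀ hq.ne' hs]
  rw [pow_eq, ← Real.rpow_natCast, ← Real.rpow_natCast, ← Real.rpow_add hq₀, ← Real.rpow_add hq₀]
  exact Real.rpow_le_rpow_of_exponent_le hq.le (by linarith)

theorem ncard_zero_one_neg_one_two_neg_two {p : ℕ} (hp : 4 < p) :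
    ({0, 1, -1, 2, -2} : Set (ZMod p)).ncard = 5 := by
  have image_eq :
      ({0, 1, -1, 2, -2} : Set (ZMod p)) = Int.cast '' ({0, 1, -1, 2, -2} : Set ℤ) := by
    simp [Set.image_insert_eq]
  have injOn : Set.InjOn (Int.cast : ℤ → ZMod p) {0, 1, -1, 2, -2} := by
    intro a ha b hb hab
    have dvd_sub : (p : ℤ) ∣ b - a := (ZMod.intCast_eq_intCast_iff_dvd_sub a b p).mp hab
    have abs_sub_lt : |b - a| < p := by
      simp only [Set.mem_insert_iff, Set.mem_singleton_iff] at ha hb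
      rw [abs_lt]
      omega
    exact (sub_eq_zero.mp (Int.eq_zero_of_abs_lt_dvd dvd_sub abs_sub_lt)).symm
  rw [image_eq, injOn.ncard_image, Set.ncard_eq_toFinset_card']
  rfl

theorem card_matrix (ι κ K : Type*) [Finite ι] [Finite κ] :
    Nat.card (Matrix ι κ K) = Nat.card K ^ (Nat.card ι * Nat.card κ) := by
  rw [Nat.card_congr (of (m := ι) (n := κ) (α := K)).symm, Nat.card_fun, Nat.card_fun, ← pow_mul,
    mul_comm]

theorem surjective_vecMul_of_ne_zero {ι κ K : Type*} [Fintype ι] [DivisionRing K] {x : ι → K}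
    (hx : x ≠ 0) : Function.Surjective fun G : Matrix ι κ K ↦ x ᵥ* G := by
  classical
  intro y
  obtain ⟨i, hi⟩ := Function.ne_iff.mp hx
  refine ⟨vecMulVec (Pi.single i (x i)⁻¹) y, ?_⟩
  simp [vecMul_vecMulVec, mul_inv_cancel₀ hi]

theorem card_matrix_le_ncard_exists_add_ncard_forall {ι κ K : Type*} [Fintype ι]
    [Finite κ] [Semiring K] [Finite K] (S : Set K) :
    Nat.card (Matrix ι κ K) ≤
      {G : Matrix ι κ K | ∃ x : ι → K, x ≠ 0 ∧ ∀ j, (x ᵥ* G) j ∈ S}.ncard +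
        {G : Matrix ι κ K | ∀ x : ι → K, (∀ j, (x ᵥ* G) j ∈ S) → x ᵥ* G = 0}.ncard := by
  rw [← Set.ncard_add_ncard_compl {G : Matrix ι κ K | ∃ x : ι → K, x ≠ 0 ∧ ∀ j, (x ᵥ* G) j ∈ S}]
  gcongr
  · exact Set.toFinite _
  · intro G hG x hxG
    have hx : x = 0 := by_contra fun hx ↦ hG ⟨x, hx, hxG⟩
    rw [hx, zero_vecMul]

section FieldAlphabet

variable {ι κ K : Type*} [Fintype ι] [Finite κ] [Field K]

theorem ncard_vecMul_mem_mul_pow {x : ι → K} (hx : x ≠ 0) (S : Set K) :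
    {G : Matrix ι κ K | ∀ j, (x ᵥ* G) j ∈ S}.ncard * Nat.card K ^ Nat.card κ =
      S.ncard ^ Nat.card κ * Nat.card (Matrix ι κ K) := by
  let encode : Matrix ι κ K →+ (κ → K) := (vecMulBilin K K x).toAddMonoidHom
  have eq_preimage :
      {G : Matrix ι κ K | ∀ j, (x ᵥ* G) j ∈ S} = encode ⁻¹' Set.univ.pi fun _ ↦ S := by
    ext G
    simp [encode]
  have card_words : Nat.card (Set.univ.pi fun _ : κ ↦ S) = S.ncard ^ Nat.card κ := by
    rw [Nat.card_congr (Equiv.Set.univPi _), Nat.card_fun, Nat.card_coe_set_eq]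
  rw [eq_preimage, ← card_words, ← Nat.card_fun]
  exact card_preimage_mul_card_codomain (surjective_vecMul_of_ne_zero hx) _

variable [Finite K]

theorem ncard_exists_vecMul_mem_mul_pow_le (S : Set K) :
    {G : Matrix ι κ K | ∃ x : ι → K, x ≠ 0 ∧ ∀ j, (x ᵥ* G) j ∈ S}.ncard *
        Nat.card K ^ Nat.card κ ≤
      Nat.card K ^ Nat.card ι * S.ncard ^ Nat.card κ * Nat.card (Matrix ι κ K) := by
  have := Fintype.ofFinite (ι → K)
  let encodedInto (x : ι → K) : Set (Matrix ι κ K) := {G | x ≠ 0 ∧ ∀ j, (x ᵥ* G) j ∈ S}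
  have ncard_encodedInto_le (x : ι → K) : (encodedInto x).ncard * Nat.card K ^ Nat.card κ ≤
      S.ncard ^ Nat.card κ * Nat.card (Matrix ι κ K) := by
    by_cases hx : x = 0
    · simp [encodedInto, hx]
    · simp [encodedInto, hx, ncard_vecMul_mem_mul_pow]
  calc {G : Matrix ι κ K | ∃ x : ι → K, x ≠ 0 ∧ ∀ j, (x ᵥ* G) j ∈ S}.ncard *
          Nat.card K ^ Nat.card κ
      = (⋃ x, encodedInto x).ncard * Nat.card K ^ Nat.card κ := by
        rw [← Set.ofPred_exists]
    _ ≤ (∑ x, (encodedInto x).ncard) * Nat.card K ^ Nat.card κ := by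
        gcongr
        exact Set.ncard_iUnion_le_of_fintype encodedInto
    _ ≤ ∑ _x : ι → K, S.ncard ^ Nat.card κ * Nat.card (Matrix ι κ K) := by
        rw [Finset.sum_mul]
        exact Finset.sum_le_sum fun x _ ↦ ncard_encodedInto_le x
    _ = Nat.card K ^ Nat.card ι * S.ncard ^ Nat.card κ * Nat.card (Matrix ι κ K) := by
        rw [Finset.sum_const, Finset.card_univ, ← Nat.card_eq_fintype_card, Nat.card_fun,
          smul_eq_mul, mul_assoc]

theorem ncard_exists_vecMul_mem_le_rpow {S : Set K} (hS : S.Nonempty) {ε : ℝ}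
    (hικ : (Nat.card ι : ℝ) ≤ Nat.card κ * (1 - Real.logb (Nat.card K) S.ncard - ε)) :
    ({G : Matrix ι κ K | ∃ x : ι → K, x ≠ 0 ∧ ∀ j, (x ᵥ* G) j ∈ S}.ncard : ℝ) ≤
      (Nat.card (Matrix ι κ K) : ℝ) * (Nat.card K : ℝ) ^ (-(ε * Nat.card κ)) := by
  have hK : (1 : ℝ) < Nat.card K := mod_cast Finite.one_lt_card
  have hS' : (0 : ℝ) < S.ncard := mod_cast hS.ncard_pos
  refine le_of_mul_le_mul_right ?_ (show (0 : ℝ) < (Nat.card K : ℝ) ^ Nat.card κ by positivity)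
  calc ({G : Matrix ι κ K | ∃ x : ι → K, x ≠ 0 ∧ ∀ j, (x ᵥ* G) j ∈ S}.ncard : ℝ) *
          (Nat.card K : ℝ) ^ Nat.card κ
      ≤ (Nat.card K : ℝ) ^ Nat.card ι * (S.ncard : ℝ) ^ Nat.card κ * Nat.card (Matrix ι κ K) :=
        mod_cast ncard_exists_vecMul_mem_mul_pow_le S
    _ ≤ (Nat.card K : ℝ) ^ (-(ε * Nat.card κ)) * (Nat.card K : ℝ) ^ Nat.card κ *
          Nat.card (Matrix ι κ K) :=
        mul_le_mul_of_nonneg_right (pow_mul_pow_le_rpow_mul_pow hK hS' hικ) (Nat.cast_nonneg _)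
    _ = Nat.card (Matrix ι κ K) * (Nat.card K : ℝ) ^ (-(ε * Nat.card κ)) *
          (Nat.card K : ℝ) ^ Nat.card κ := by ring

theorem stmt6_general {S : Set K} (hS : S.Nonempty) {ε : ℝ}
    (hικ : (Nat.card ι : ℝ) ≤ Nat.card κ * (1 - Real.logb (Nat.card K) S.ncard - ε)) :
    (Nat.card {G : Matrix ι κ K | ∃ x : ι → K, x ≠ 0 ∧ ∀ j, (x ᵥ* G) j ∈ S} : ℝ) ≤
        (Nat.card K : ℝ) ^ (Nat.card ι * Nat.card κ) * (Nat.card K : ℝ) ^ (-(ε * Nat.card κ)) ∧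
      1 - (Nat.card K : ℝ) ^ (-(ε * Nat.card κ)) ≤
        (Nat.card {G : Matrix ι κ K | ∀ x : ι → K, (∀ j, (x ᵥ* G) j ∈ S) → x ᵥ* G = 0} : ℝ) /
          (Nat.card K : ℝ) ^ (Nat.card ι * Nat.card κ) := by
  have few_bad := ncard_exists_vecMul_mem_le_rpow (κ := κ) hS hικ
  have cover : (Nat.card (Matrix ι κ K) : ℝ) ≤ _ :=
    Nat.cast_le.mpr (card_matrix_le_ncard_exists_add_ncard_forall S)
  rw [Nat.cast_add] at cover
  simp only [card_matrix, Nat.cast_pow] at few_bad cover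
  refine ⟨few_bad, ?_⟩
  rw [le_div_iff₀ (pow_pos (Nat.cast_pos.mpr Nat.card_pos) _), Nat.card_coe_set_eq]
  linarith

end FieldAlphabet

theorem stmt6 {p : ℕ} [Fact p.Prime] (hp : 5 < p) {k n : ℕ} (hk : 0 < k) (hn : 0 < n)
    {ε : ℝ} (hε : 0 < ε) (hε' : ε < 1 - Real.logb p 5)
    (hkn : (k : ℝ) ≤ (n : ℝ) * (1 - Real.logb p 5 - ε)) :
    (Nat.card {G : Matrix (Fin k) (Fin n) (ZMod p) |
        ∃ x : Fin k → ZMod p, x ≠ 0 ∧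
          ∀ j, Matrix.vecMul x G j ∈ ({0, 1, -1, 2, -2} : Set (ZMod p))} : ℝ)
      ≤ (p : ℝ) ^ (k * n) * (p : ℝ) ^ (-(ε * n)) ∧
    1 - (p : ℝ) ^ (-(ε * n)) ≤
      (Nat.card {G : Matrix (Fin k) (Fin n) (ZMod p) |
        ∀ x : Fin k → ZMod p,
          (∀ j, Matrix.vecMul x G j ∈ ({0, 1, -1, 2, -2} : Set (ZMod p))) →
          Matrix.vecMul x G = 0} : ℝ) / (p : ℝ) ^ (k * n) := by
  have card_alphabet := ncard_zero_one_neg_one_two_neg_two (p := p) (by omega)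
  simpa only [Nat.card_zmod, Nat.card_fin, card_alphabet, Nat.cast_ofNat, hkn, forall_const] using
    stmt6_general (ι := Fin k) (κ := Fin n) (ε := ε)
      (Set.insert_nonempty (0 : ZMod p) {1, -1, 2, -2})
end

section
/- Let q be an odd prime, a a positive integer with a ≤ (q−1)/2, and n, r, v positive integers. Let H be an r×n matrix over ZMod q with columns h_0, …, h_{n−1}, let u = (u_0, …, u_{v−1}) be a vector of nonzero elements of ZMod q, and let H′ be the r×(n·v) matrix whose column with index i·v + j equals u_j · h_i for i ∈ [0, n−1], j ∈ [0, v−1]. Let s ∈ (ZMod q)^r. Then for every vector e′ ∈ (ZMod q)^{nv} such that every entry of e′ lies in {0, ±1, ±2, …, ±a} (as elements of ZMod q) and H′·e′ᵀ = s, the vector e ∈ (ZMod q)^n defined by e_i = Σ_{j=0}^{v−1} e′_{iv+j} · u_j satisfies H·eᵀ = s and wt_H(e) ≤ wt_H(e′). -/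
/-- The set `{0, ±1, ±2, …, ±a} ⊆ ZMod q`. -/
def restrictedSet (q a : ℕ) : Set (ZMod q) :=
  {x | ∃ y : ℕ, y ≤ a ∧ (x = (y : ZMod q) ∨ x = -(y : ZMod q))}

theorem hammingNorm_sum_prod_le {ι κ M : Type*} [Fintype ι] [Fintype κ] [AddCommMonoid M]
    [DecidableEq M] (x : ι × κ → M) :
    hammingNorm (fun i => ∑ j, x (i, j)) ≤ hammingNorm x := by
  refine Finset.card_le_card_of_surjOn Prod.fst fun i hi => ?_
  obtain ⟨j, -, hj⟩ := Finset.exists_ne_zero_of_sum_ne_zero ((Finset.mem_filter_univ i).mp hi)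
  exact ⟨(i, j), (Finset.mem_filter_univ (i, j)).mpr hj, rfl⟩

theorem mulVec_sum_mul_of_scaled_columns {m ι κ R : Type*} [Fintype ι] [Fintype κ]
    [NonUnitalCommSemiring R] {H : Matrix m ι R} {u : κ → R} {H' : Matrix m (ι × κ) R}
    (hH' : ∀ row i j, H' row (i, j) = u j * H row i) (x : ι × κ → R) :
    H.mulVec (fun i => ∑ j, x (i, j) * u j) = H'.mulVec x := by
  funext row
  calc ∑ i, H row i * ∑ j, x (i, j) * u j
      = ∑ i, ∑ j, u j * H row i * x (i, j) := by
        simp only [Finset.mul_sum, mul_assoc, mul_comm]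
    _ = ∑ l, H' row l * x l := by simp only [Fintype.sum_prod_type, hH']

theorem stmt7_general {m ι κ R : Type*} [Fintype ι] [Fintype κ] [NonUnitalCommSemiring R]
    [DecidableEq R] (H : Matrix m ι R) (u : κ → R) (H' : Matrix m (ι × κ) R)
    (hH' : ∀ row i j, H' row (i, j) = u j * H row i) (s : m → R) (e' : ι × κ → R)
    (he's : H'.mulVec e' = s) :
    H.mulVec (fun i => ∑ j, e' (i, j) * u j) = s ∧
    hammingNorm (fun i => ∑ j, e' (i, j) * u j) ≤ hammingNorm e' := by
  refine ⟨(mulVec_sum_mul_of_scaled_columns hH' e').trans he's, ?_⟩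
  calc hammingNorm (fun i => ∑ j, e' (i, j) * u j)
      ≤ hammingNorm (fun l : ι × κ => e' l * u l.2) :=
        hammingNorm_sum_prod_le fun l => e' l * u l.2
    _ ≤ hammingNorm e' :=
        hammingNorm_comp_le_hammingNorm (fun (l : ι × κ) y => y * u l.2) fun l => zero_mul (u l.2)

theorem stmt7 {q : ℕ} [Fact q.Prime] (hodd : Odd q) {a : ℕ} (ha : 1 ≤ a)
    (ha' : a ≤ (q - 1) / 2) {n r v : ℕ} (hn : 0 < n) (hr : 0 < r) (hv : 0 < v)
    (H : Matrix (Fin r) (Fin n) (ZMod q)) (u : Fin v → ZMod q) (hu : ∀ j, u j ≠ 0)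
    (H' : Matrix (Fin r) (Fin n × Fin v) (ZMod q))
    (hH' : ∀ (row : Fin r) (i : Fin n) (j : Fin v), H' row (i, j) = u j * H row i)
    (s : Fin r → ZMod q) (e' : Fin n × Fin v → ZMod q)
    (he'res : ∀ l, e' l ∈ restrictedSet q a)
    (he's : H'.mulVec e' = s) :
    H.mulVec (fun i => ∑ j, e' (i, j) * u j) = s ∧
    hammingNorm (fun i => ∑ j, e' (i, j) * u j) ≤ hammingNorm e' :=
  stmt7_general H u H' hH' s e' he's
end

section
/- Let q be an odd prime, a a positive integer with a ≤ (q−1)/2, and n, r, v, t positive integers. Let H be an r×n matrix over ZMod q with columns h_0, …, h_{n−1}, let u = (u_0, …, u_{v−1}) be a vector of nonzero elements of ZMod q satisfying the covering property (for every nonzero b ∈ ZMod q there exist j ∈ [0, v−1] and an integer y with 1 ≤ y ≤ a such that b = y·u_j or b = −y·u_j in ZMod q), and let H′ be the r×(n·v) matrix whose column with index i·v + j equals u_j · h_i. Then for every s ∈ (ZMod q)^r: there exists e ∈ (ZMod q)^n with wt_H(e) ≤ t and H·eᵀ = s if and only if there exists e′ ∈ (ZMod q)^{nv} with every entry in {0,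 ±1, ±2, …, ±a}, wt_H(e′) ≤ t, and H′·e′ᵀ = s. -/
/-!
Contracting each block `e' (i, ·)` to the single entry `∑ j, u j * e' (i, j)` turns solutions of
`H' e' = s` into solutions of `H e = s`, and a nonzero contracted entry forces a nonzero entry in
its block, so the weight does not grow. Conversely, covering lets every nonzero entry of `e` be the
contraction of a block with one nonzero entry, taken from the restricted set; zero entries are the
contraction of zero blocks.
-/

section HammingNorm

variable {ι κ M : Type*} [Fintype ι] [Zero M] [DecidableEq M]

theorem hammingNorm_eq_sum_ite_s9 (e : ι → M) :
    hammingNorm e = ∑ i, if e i = 0 then 0 else 1 := by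
  simp only [hammingNorm, Finset.card_filter, ne_eq, ite_not]

theorem hammingNorm_eq_sum_hammingNorm_curry [Fintype κ] (e : ι × κ → M) :
    hammingNorm e = ∑ i, hammingNorm (Function.curry e i) := by
  simp only [hammingNorm_eq_sum_ite_s9, Fintype.sum_prod_type]
  rfl

theorem hammingNorm_single_le_one [DecidableEq ι] (i : ι) (x : M) :
    hammingNorm (Pi.single i x : ι → M) ≤ 1 := by
  refine (Finset.card_le_card fun j hj => ?_).trans (Finset.card_singleton i).le
  rw [Finset.mem_singleton]
  by_contra hji
  exact (Finset.mem_filter.mp hj).2 (Pi.single_eq_of_ne (M := fun _ => M) hji x)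

end HammingNorm

section BlockDotProduct

variable {ι κ m R : Type*} [Fintype κ]

/-- The contraction of a vector indexed by `ι × κ` along `u : κ → R`: its `i`-th entry is the dot
product of `u` with the `i`-th block of the vector. It converts error vectors for the extended
matrix into error vectors for the original one. -/
def blockDotProduct [NonUnitalNonAssocSemiring R] (u : κ → R) (e' : ι × κ → R) : ι → R :=
  fun i => u ⬝ᵥ Function.curry e' i

theorem mulVec_blockDotProduct [Fintype ι] [NonUnitalCommSemiring R] {H : Matrix m ι R}
    {H' : Matrix m (ι × κ) R} {u : κ → R} (hH' : ∀ row i j, H' row (i, j) = u j * H row i)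
    (e' : ι × κ → R) : H.mulVec (blockDotProduct u e') = H'.mulVec e' := by
  ext row
  simp only [Matrix.mulVec, dotProduct, blockDotProduct, Function.curry_apply,
    Fintype.sum_prod_type, hH', Finset.mul_sum]
  exact Fintype.sum_congr _ _ fun i => Fintype.sum_congr _ _ fun j => by
    rw [← mul_assoc, mul_comm (H row i)]

variable [NonUnitalNonAssocSemiring R] [DecidableEq R] {u : κ → R} {A : Set R}

theorem ite_dotProduct_eq_zero_le_hammingNorm (u c : κ → R) :
    (if u ⬝ᵥ c = 0 then 0 else 1) ≤ hammingNorm c := by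
  split_ifs with hdot
  · exact Nat.zero_le _
  · exact hammingNorm_pos_iff.mpr fun hc => hdot (by rw [hc, dotProduct_zero])

theorem hammingNorm_blockDotProduct_le [Fintype ι] (u : κ → R) (e' : ι × κ → R) :
    hammingNorm (blockDotProduct u e') ≤ hammingNorm e' := by
  rw [hammingNorm_eq_sum_ite_s9, hammingNorm_eq_sum_hammingNorm_curry]
  exact Finset.sum_le_sum fun i _ => ite_dotProduct_eq_zero_le_hammingNorm u _

theorem exists_dotProduct_eq_of_cover (hA : 0 ∈ A)
    (hcover : ∀ b ≠ 0, ∃ j, ∃ z ∈ A, u j * z = b) (b : R) :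
    ∃ c : κ → R, (∀ j, c j ∈ A) ∧ hammingNorm c ≤ (if b = 0 then 0 else 1) ∧ u ⬝ᵥ c = b := by
  classical
  by_cases hb : b = 0
  · exact ⟨0, fun _ => hA, by simp [hb], by rw [dotProduct_zero, hb]⟩
  · obtain ⟨j, z, hz, hzb⟩ := hcover b hb
    refine ⟨Pi.single j z, fun k => ?_, ?_, by rw [dotProduct_single, hzb]⟩
    · rw [Pi.single_apply]
      split_ifs
      exacts [hz, hA]
    · rw [if_neg hb]
      exact hammingNorm_single_le_one j z

theorem exists_blockDotProduct_eq_of_cover [Fintype ι] (hA : 0 ∈ A)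
    (hcover : ∀ b ≠ 0, ∃ j, ∃ z ∈ A, u j * z = b) (e : ι → R) :
    ∃ e' : ι × κ → R,
      (∀ l, e' l ∈ A) ∧ hammingNorm e' ≤ hammingNorm e ∧ blockDotProduct u e' = e := by
  choose c hcA hcnorm hcdot using exists_dotProduct_eq_of_cover hA hcover
  refine ⟨fun l => c (e l.1) l.2, fun l => hcA _ _, ?_, funext fun i => hcdot (e i)⟩
  rw [hammingNorm_eq_sum_hammingNorm_curry, hammingNorm_eq_sum_ite_s9 e]
  exact Finset.sum_le_sum fun i _ => hcnorm (e i)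

end BlockDotProduct

section RestrictedSet

variable {q a : ℕ}

theorem zero_mem_restrictedSet : 0 ∈ restrictedSet q a :=
  ⟨0, Nat.zero_le a, Or.inl Nat.cast_zero.symm⟩

theorem exists_mem_restrictedSet_mul_eq {x b : ZMod q} {y : ℕ} (hy : y ≤ a)
    (hb : b = y * x ∨ b = -(y * x)) : ∃ z ∈ restrictedSet q a, x * z = b := by
  rcases hb with rfl | rfl
  · exact ⟨y, ⟨y, hy, Or.inl rfl⟩, mul_comm _ _⟩
  · exact ⟨-y, ⟨y, hy, Or.inr rfl⟩, by rw [mul_neg, mul_comm]⟩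

end RestrictedSet

theorem stmt9_general {ι κ m R : Type*} [Fintype ι] [Fintype κ] [NonUnitalCommSemiring R]
    [DecidableEq R] {A : Set R} (hA : 0 ∈ A) {u : κ → R}
    (hcover : ∀ b ≠ 0, ∃ j, ∃ z ∈ A, u j * z = b) {H : Matrix m ι R} {H' : Matrix m (ι × κ) R}
    (hH' : ∀ row i j, H' row (i, j) = u j * H row i) (t : ℕ) (s : m → R) :
    (∃ e : ι → R, hammingNorm e ≤ t ∧ H.mulVec e = s) ↔
    (∃ e' : ι × κ → R, (∀ l, e' l ∈ A) ∧ hammingNorm e' ≤ t ∧ H'.mulVec e' = s) := by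
  constructor
  · rintro ⟨e, hnorm, hs⟩
    obtain ⟨e', he'A, he'norm, rfl⟩ := exists_blockDotProduct_eq_of_cover hA hcover e
    exact ⟨e', he'A, he'norm.trans hnorm, (mulVec_blockDotProduct hH' e').symm.trans hs⟩
  · rintro ⟨e', -, hnorm, hs⟩
    exact ⟨blockDotProduct u e', (hammingNorm_blockDotProduct_le u e').trans hnorm,
      (mulVec_blockDotProduct hH' e').trans hs⟩

theorem stmt9 {q : ℕ} [Fact q.Prime] (hodd : Odd q) {a : ℕ} (ha : 1 ≤ a)
    (ha' : a ≤ (q - 1) / 2) {n r v t : ℕ} (hn : 0 < n) (hr : 0 < r) (hv : 0 < v) (ht : 0 < t)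
    (H : Matrix (Fin r) (Fin n) (ZMod q)) (u : Fin v → ZMod q) (hu : ∀ j, u j ≠ 0)
    (hcov : ∀ b : ZMod q, b ≠ 0 → ∃ (j : Fin v) (y : ℕ), 1 ≤ y ∧ y ≤ a ∧
      (b = (y : ZMod q) * u j ∨ b = -((y : ZMod q) * u j)))
    (H' : Matrix (Fin r) (Fin n × Fin v) (ZMod q))
    (hH' : ∀ (row : Fin r) (i : Fin n) (j : Fin v), H' row (i, j) = u j * H row i)
    (s : Fin r → ZMod q) :
    (∃ e : Fin n → ZMod q, hammingNorm e ≤ t ∧ H.mulVec e = s) ↔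
    (∃ e' : Fin n × Fin v → ZMod q,
      (∀ l, e' l ∈ restrictedSet q a) ∧ hammingNorm e' ≤ t ∧ H'.mulVec e' = s) :=
  stmt9_general zero_mem_restrictedSet (fun b hb =>
    let ⟨j, _, _, hy, hby⟩ := hcov b hb; ⟨j, exists_mem_restrictedSet_mul_eq hy hby⟩) hH' t s
end

section
/- Let p ≥ 5 be a prime and n, k positive integers with k ≤ n. Let H be an (n−k)×n matrix over ZMod p, let e ∈ (ZMod p)^n have every entry in {0, 1, −1}, and set s = H·eᵀ. Let σ be a permutation of {0, …, n−1}, let v ∈ {1, −1}^n, and define the signed monomial map τ : (ZMod p)^n → (ZMod p)^n by τ(a)_i = v_{σ(i)} · a_{σ(i)}. Then for every u ∈ (ZMod p)^n and every nonzero z ∈ ZMod p, setting y = τ(u + z·e): (i) H·(τ^{−1}(y))ᵀ − z·s = H·uᵀ; (ii) y − z·τ(e) = τ(u); (iii) every entry of τ(e) lies in {0, 1, −1} and the Hamming weight of τ(e) equals the Hamming weight of e. (This establishes that an honest prover in the restricted-error CVE identification scheme passes verification for both challenge values b = 0 and b = 1.) -/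
/-!
A monomial map `τ` and the syndrome map `u ↦ H u` are both linear, and for a linear map `f` the
response `f (u + z • e)` is unmasked by `f (u + z • e) - z • f e = f u`; this answers both
challenges. Signs are units and preserve `{0, 1, -1}`, so `τ e` is again a restricted vector, of
the same weight as `e`.
-/

section Linear

variable {R M N F : Type*} [Semiring R] [AddCommMonoid M] [AddCommGroup N] [Module R M]
  [Module R N] [FunLike F M N] [LinearMapClass F R M N]

theorem map_add_smul_sub_smul_map (f : F) (u e : M) (z : R) :
    f (u + z • e) - z • f e = f u := by
  rw [map_add, map_smul, add_sub_cancel_right]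

end Linear

theorem hammingNorm_comp_equiv {ι κ α : Type*} [Fintype ι] [Fintype κ] [DecidableEq α] [Zero α]
    (σ : ι ≃ κ) (x : κ → α) : hammingNorm (x ∘ σ) = hammingNorm x :=
  Finset.card_equiv σ fun i => by simp

theorem isUnit_of_eq_one_or_eq_neg_one {R : Type*} [Monoid R] [HasDistribNeg R] {a : R}
    (ha : a = 1 ∨ a = -1) : IsUnit a := by
  rcases ha with rfl | rfl
  exacts [isUnit_one, isUnit_one.neg]

theorem neg_mem_zero_one_neg_one {R : Type*} [SubtractionMonoid R] [One R] {a : R}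
    (ha : a ∈ ({0, 1, -1} : Set R)) : -a ∈ ({0, 1, -1} : Set R) := by
  rcases ha with rfl | rfl | rfl <;> simp

section MonomialMap

variable {R ι κ : Type*}

/-- The monomial transformation `a ↦ (v (σ i) * a (σ i))ᵢ`: entries are scaled by `v` and then
reindexed along `σ`. A general `σ : ι → κ` is allowed; the paper's `τ` is the case of a
permutation `σ` and signs `v`. -/
def monomialMap [CommSemiring R] (σ : ι → κ) (v : κ → R) :
    (κ → R) →ₗ[R] (ι → R) :=
  LinearMap.pi fun i => v (σ i) • LinearMap.proj (σ i)

@[simp]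
theorem monomialMap_apply [CommSemiring R] (σ : ι → κ) (v a : κ → R) (i : ι) :
    monomialMap σ v a i = v (σ i) * a (σ i) :=
  rfl

theorem hammingNorm_monomialMap [CommSemiring R] [DecidableEq R] [Fintype ι] [Fintype κ] (σ : ι ≃ κ)
    {v : κ → R} (hv : ∀ j, IsLeftRegular (v j)) (a : κ → R) :
    hammingNorm (monomialMap σ v a) = hammingNorm a :=
  calc hammingNorm (monomialMap σ v a)
    _ = hammingNorm fun j => v j * a j := hammingNorm_comp_equiv σ fun j => v j * a j
    _ = hammingNorm a := hammingNorm_comp (fun j => (v j * ·)) hv fun j => mul_zero (v j)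

theorem monomialMap_apply_mem_of_signs [CommRing R] {S : Set R} (hS : ∀ x ∈ S, -x ∈ S) (σ : ι → κ)
    {v a : κ → R} (hv : ∀ j, v j = 1 ∨ v j = -1) (ha : ∀ j, a j ∈ S) (i : ι) :
    monomialMap σ v a i ∈ S := by
  rcases hv (σ i) with hone | hneg
  · simpa only [monomialMap_apply, hone, one_mul] using ha (σ i)
  · simpa only [monomialMap_apply, hneg, neg_one_mul] using hS _ (ha (σ i))

end MonomialMap

theorem stmt12_general {R m ι κ : Type*} [CommRing R] [DecidableEq R] [Fintype ι] [Fintype κ]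
    (H : Matrix m κ R) {e : κ → R} (he : ∀ j, e j ∈ ({0, 1, -1} : Set R))
    (σ : ι ≃ κ) {v : κ → R} (hv : ∀ j, v j = 1 ∨ v j = -1)
    {τinv : (ι → R) → (κ → R)} (hinv : Function.LeftInverse τinv (monomialMap σ v))
    (u : κ → R) (z : R) :
    H.mulVec (τinv (monomialMap σ v (u + z • e))) - z • H.mulVec e = H.mulVec u ∧
      monomialMap σ v (u + z • e) - z • monomialMap σ v e = monomialMap σ v u ∧
      (∀ i, monomialMap σ v e i ∈ ({0, 1, -1} : Set R)) ∧
      hammingNorm (monomialMap σ v e) = hammingNorm e := by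
  have regular_sign (j : κ) : IsLeftRegular (v j) :=
    (isUnit_of_eq_one_or_eq_neg_one (hv j)).isRegular.left
  refine ⟨?_, map_add_smul_sub_smul_map _ u e z,
    monomialMap_apply_mem_of_signs (fun _ => neg_mem_zero_one_neg_one) σ hv he,
    hammingNorm_monomialMap σ regular_sign e⟩
  rw [hinv]
  exact map_add_smul_sub_smul_map H.mulVecLin u e z

theorem stmt12 {p : ℕ} [Fact p.Prime] (hp : 5 ≤ p) {n k : ℕ} (hk : 0 < k) (hkn : k ≤ n)
    (H : Matrix (Fin (n - k)) (Fin n) (ZMod p))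
    (e : Fin n → ZMod p) (he : ∀ i, e i ∈ ({0, 1, -1} : Set (ZMod p)))
    (s : Fin (n - k) → ZMod p) (hs : s = H.mulVec e)
    (σ : Equiv.Perm (Fin n)) (v : Fin n → ZMod p) (hv : ∀ i, v i = 1 ∨ v i = -1)
    (τ : (Fin n → ZMod p) → (Fin n → ZMod p))
    (hτ : ∀ a i, τ a i = v (σ i) * a (σ i))
    (τinv : (Fin n → ZMod p) → (Fin n → ZMod p))
    (hinv1 : Function.LeftInverse τinv τ) (hinv2 : Function.RightInverse τinv τ) :
    ∀ (u : Fin n → ZMod p) (z : ZMod p), z ≠ 0 →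
      H.mulVec (τinv (τ (u + z • e))) - z • s = H.mulVec u ∧
      τ (u + z • e) - z • τ e = τ u ∧
      (∀ i, τ e i ∈ ({0, 1, -1} : Set (ZMod p))) ∧
      hammingNorm (τ e) = hammingNorm e := by
  obtain rfl : τ = monomialMap σ v := funext fun a => funext (hτ a)
  exact fun u z _ => hs ▸ stmt12_general H he σ hv hinv1 u z
end
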